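/- Let H be a real Hilbert space, n ≥ 2, and let u : [0, T) → H^n be a solution of the ODE system du_i/dt = Σ_{j≠i} (u_j − u_i)/‖u_j − u_i‖ with initial value u(0) = x, whose coordinates are pairwise distinct at every time in [0, T). Then T ≤ δ(x)/2, where δ(x) = min_{i<j} ‖x_i − x_j‖. -/

import Mathlib

/-!
The unit vector field `x ↦ x / ‖x‖` is monotone, being the gradient of the norm. In the derivative
of `‖u i - u j‖`, the pull of every third particle is therefore nonpositive, while `i` and `j` each
contribute `-1`. So `‖u i - u j‖ + 2 t` is nonincreasing, and as it is at least `2 t`, the solution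
cannot outlive half of the initial gap.
-/

open Set
open NormedSpace (normalize)
open scoped RealInnerProductSpace

section InnerProductSpace

variable {E : Type*} [NormedAddCommGroup E] [InnerProductSpace ℝ E]

lemma real_inner_normalize_self (a : E) : ⟪a, normalize a⟫ = ‖a‖ := by
  rw [NormedSpace.normalize, inner_smul_right, real_inner_self_eq_norm_mul_norm, ← mul_assoc,
    inv_mul_mul_self]

lemma real_inner_normalize_le_norm (a b : E) : ⟪a, normalize b⟫ ≤ ‖a‖ := by
  rw [NormedSpace.normalize, inner_smul_right]
  exact inv_mul_le_of_le_mul₀ (norm_nonneg b) (norm_nonneg a)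
    ((real_inner_le_norm a b).trans_eq (mul_comm _ _))

lemma inner_sub_normalize_sub_nonneg (a b : E) : 0 ≤ ⟪a - b, normalize a - normalize b⟫ := by
  simp only [inner_sub_left, inner_sub_right, real_inner_normalize_self]
  linarith [real_inner_normalize_le_norm a b, real_inner_normalize_le_norm b a]

variable {f f' : ℝ → E} {s : Set ℝ} {c : ℝ}

lemma hasDerivWithinAt_norm {v : E} {t : ℝ} (hf : HasDerivWithinAt f v s t) (h0 : f t ≠ 0) :
    HasDerivWithinAt (fun r ↦ ‖f r‖) (⟪f t, v⟫ / ‖f t‖) s t := by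
  have hsqrt := hf.norm_sq.sqrt (pow_ne_zero 2 (norm_ne_zero_iff.2 h0))
  simpa only [Real.sqrt_sq (norm_nonneg _), mul_div_mul_left _ _ (two_ne_zero' ℝ)] using hsqrt

lemma antitoneOn_norm_add_mul_of_inner_le (hs : Convex ℝ s)
    (hf : ∀ t ∈ s, HasDerivWithinAt f (f' t) s t) (h0 : ∀ t ∈ s, f t ≠ 0)
    (hinner : ∀ t ∈ s, ⟪f t, f' t⟫ ≤ -c * ‖f t‖) :
    AntitoneOn (fun t ↦ ‖f t‖ + c * t) s := by
  have hderiv : ∀ t ∈ s, HasDerivWithinAt (fun r ↦ ‖f r‖ + c * r)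
      (⟪f t, f' t⟫ / ‖f t‖ + c) s t := fun t ht ↦ by
    simpa only [id_eq, mul_one] using
      (hasDerivWithinAt_norm (hf t ht) (h0 t ht)).fun_add ((hasDerivWithinAt_id t s).const_mul c)
  have hnonpos : ∀ t ∈ s, ⟪f t, f' t⟫ / ‖f t‖ + c ≤ 0 := fun t ht ↦ by
    have := (div_le_iff₀ (norm_pos_iff.2 (h0 t ht))).2 (hinner t ht)
    linarith
  exact antitoneOn_of_hasDerivWithinAt_nonpos hs (fun t ht ↦ (hderiv t ht).continuousWithinAt)
    (fun t ht ↦ (hderiv t (interior_subset ht)).mono interior_subset)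
    (fun t ht ↦ hnonpos t (interior_subset ht))

lemma le_norm_div_of_inner_le {T : ℝ} (hc : 0 < c)
    (hf : ∀ t ∈ Ico 0 T, HasDerivWithinAt f (f' t) (Ico 0 T) t) (h0 : ∀ t ∈ Ico 0 T, f t ≠ 0)
    (hinner : ∀ t ∈ Ico 0 T, ⟪f t, f' t⟫ ≤ -c * ‖f t‖) :
    T ≤ ‖f 0‖ / c := by
  have hanti := antitoneOn_norm_add_mul_of_inner_le (convex_Ico 0 T) hf h0 hinner
  refine le_of_forall_lt_imp_le_of_dense fun t htT ↦ ?_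
  rcases lt_or_ge t 0 with ht | ht
  · exact ht.le.trans (by positivity)
  · have hle : ‖f t‖ + c * t ≤ ‖f 0‖ + c * 0 := hanti ⟨le_rfl, ht.trans_lt htT⟩ ⟨ht, htT⟩ ht
    rw [le_div_iff₀' hc]
    linarith [norm_nonneg (f t)]

end InnerProductSpace

section Attraction

variable {ι H : Type*} [Fintype ι] [DecidableEq ι] [NormedAddCommGroup H] [InnerProductSpace ℝ H]

/-- The right-hand side of the ODE system: the total force on particle `i` of the configuration `v`,
to which every other particle contributes a pull of unit strength towards itself. Since
`normalize 0 = 0`, a particle at the same place as `i` contributes nothing. -/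
noncomputable def attraction (v : ι → H) (i : ι) : H :=
  ∑ j ∈ Finset.univ.erase i, normalize (v j - v i)

lemma attraction_eq_sum_univ (v : ι → H) (i : ι) :
    attraction v i = ∑ j, normalize (v j - v i) :=
  Finset.sum_erase _ (by simp)

lemma two_mul_norm_sub_le_inner_attraction_sub (v : ι → H) {i j : ι} (hij : i ≠ j) :
    2 * ‖v i - v j‖ ≤ ⟪v i - v j, attraction v j - attraction v i⟫ := by
  let pull (k : ι) : ℝ := ⟪v i - v j, normalize (v k - v j) - normalize (v k - v i)⟫
  have pull_nonneg (k : ι) : 0 ≤ pull k := by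
    simpa only [sub_sub_sub_cancel_left] using
      inner_sub_normalize_sub_nonneg (v k - v j) (v k - v i)
  have pull_left : pull i = ‖v i - v j‖ := by
    simp [pull, real_inner_normalize_self]
  have pull_right : pull j = ‖v i - v j‖ := by
    have hneg : normalize (v j - v i) = -normalize (v i - v j) := by
      rw [← NormedSpace.normalize_neg, neg_sub]
    simp [pull, hneg, real_inner_normalize_self]
  calc 2 * ‖v i - v j‖ = pull i + pull j := by rw [pull_left, pull_right, two_mul]
    _ ≤ ∑ k, pull k := Finset.add_le_sum (fun k _ ↦ pull_nonneg k) (Finset.mem_univ i)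
        (Finset.mem_univ j) hij
    _ = ⟪v i - v j, attraction v j - attraction v i⟫ := by
        rw [attraction_eq_sum_univ, attraction_eq_sum_univ, ← Finset.sum_sub_distrib, inner_sum]

theorem existence_time_le_half_min_gap_general {T : ℝ} {u : ℝ → ι → H}
    (hinj : ∀ t ∈ Ico 0 T, Function.Injective (u t))
    (hode : ∀ t ∈ Ico 0 T, ∀ i,
      HasDerivWithinAt (fun s ↦ u s i) (attraction (u t) i) (Ico 0 T) t)
    {i j : ι} (hij : i ≠ j) :
    T ≤ ‖u 0 i - u 0 j‖ / 2 := by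
  refine le_norm_div_of_inner_le (f := fun t ↦ u t i - u t j) two_pos
    (fun t ht ↦ (hode t ht i).sub (hode t ht j)) (fun t ht ↦ sub_ne_zero.2 ((hinj t ht).ne hij))
    fun t _ ↦ ?_
  rw [← neg_sub (attraction (u t) j), inner_neg_right, neg_mul]
  exact neg_le_neg (two_mul_norm_sub_le_inner_attraction_sub (u t) hij)

end Attraction

/-- **Inequality (6).** If `u : [0, T) → H^n` solves
`du_i/dt = ∑_{j ≠ i} (u_j − u_i)/‖u_j − u_i‖` with `u(0) = x` and pairwise distinct
coordinates at every time in `[0, T)`, then `T ≤ δ(x)/2`,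
where `δ(x) = min_{i<j} ‖x_i − x_j‖`. -/
theorem existence_time_le_half_min_gap
    {H : Type*} [NormedAddCommGroup H] [InnerProductSpace ℝ H] [CompleteSpace H]
    (n : ℕ) (hn : 2 ≤ n) (T : ℝ) (x : Fin n → H) (u : ℝ → Fin n → H)
    (hu0 : u 0 = x)
    (hdistinct : ∀ t ∈ Set.Ico (0 : ℝ) T, ∀ i j : Fin n, i ≠ j → u t i ≠ u t j)
    (hode : ∀ t ∈ Set.Ico (0 : ℝ) T, ∀ i : Fin n,
      HasDerivWithinAt (fun s => u s i)
        (∑ j ∈ Finset.univ.erase i, (‖u t j - u t i‖)⁻¹ • (u t j - u t i))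
        (Set.Ico (0 : ℝ) T) t) :
    T ≤ sInf {d : ℝ | ∃ i j : Fin n, i < j ∧ d = ‖x i - x j‖} / 2 := by
  subst hu0
  refine (le_div_iff₀ two_pos).2 (le_csInf ⟨_, ⟨0, by lia⟩, ⟨1, by lia⟩, by simp, rfl⟩ ?_)
  rintro _ ⟨i, j, hij, rfl⟩
  exact (le_div_iff₀ two_pos).1 <| existence_time_le_half_min_gap_general
    (fun t ht _ _ ↦ not_imp_not.1 (hdistinct t ht _ _)) hode hij.ne
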